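/- arXiv:1605.09665 — 2 statements merged into one kernel-verified Lean document; each statement's English description precedes it below -/
import Mathlib

section
/- Let Λ = (λ_n)_{n∈ℕ} and Υ = (υ_n)_{n∈ℕ} be strictly increasing sequences of positive real numbers, each satisfying the gap condition and the Müntz condition, with λ_n ≤ υ_n for each n. If sup_n (υ_n − λ_n) = δ with δ < (8 Σ_{n=1}^∞ λ_n^{−1})^{−1}, then M_{Λ,p}([0,1]) and M_{Υ,p}([0,1]) are linearly topologically isomorphic Banach spaces, where 1 ≤ p < ∞. -/
/-!
The operator `D = t d/dt` has the monomials as eigenfunctions, `D t ^ m = m t ^ m`, and with the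
boundary condition `f(1) = 0` the operator `b - D` has the inverse
`H_b f (t) = ∫ₜ¹ (t / s) ^ b f(s) ds / s` on `L_p([0,1])`, of norm at most `1 / b` by the Schur
test. Since `(m - b) H_b t ^ m = t ^ b - t ^ m`, the operator `R(a, b) = 1 + (a - b) H_b` sends
`t ^ a` to `t ^ b` and, for `m ≠ b`, `t ^ m` into the span of `t ^ m` and `t ^ b`. By the resolvent
identity these operators commute and `R(a, b) R(b, a) = 1`. As `‖R(λ_n, υ_n) - 1‖` is at most
`|λ_n - υ_n| / υ_n`, which is summable, the infinite product of the `R(λ_n, υ_n)` converges. It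
sends `t ^ λ_n` into the closed span of the `t ^ υ_k`, and the product of the `R(υ_n, λ_n)` is its
inverse, so it restricts to an isomorphism between the two Müntz spaces.
-/

open MeasureTheory Filter
open scoped ENNReal NNReal Topology

/-- The Müntz space `M_{S,p}([a,b])`: the closure in `L_p([a,b],ℝ)` of the linear span of
the monomials `t ↦ t ^ λ`, `λ ∈ S`. -/
noncomputable def muntzSpace (S : Set ℝ) (p : ℝ≥0∞) [Fact (1 ≤ p)] (a b : ℝ) :
    Submodule ℝ (Lp ℝ p (volume.restrict (Set.Icc a b))) :=
  (Submodule.span ℝ {g : Lp ℝ p (volume.restrict (Set.Icc a b)) |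
    ∃ lam ∈ S, (g : ℝ → ℝ) =ᵐ[volume.restrict (Set.Icc a b)] fun t => t ^ lam}).topologicalClosure

section PseudoResolvent

variable {𝕜 𝔸 X ι : Type*} [NormedField 𝕜] {U : Set 𝕜}

/-- A pseudo-resolvent: a family `H b` of elements of a ring satisfying the resolvent identity of
`H b = (b - D)⁻¹`, without reference to the possibly unbounded operator `D`. -/
def IsPseudoResolvent [Ring 𝔸] [Module 𝕜 𝔸] (H : U → 𝔸) : Prop :=
  ∀ a b : U, H a - H b = (b - a : 𝕜) • (H a * H b)

/-- The eigenvectors `e m` of an operator `D`, `D (e m) = m • e m`, as seen by a right inverse `H b`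
of `b - D`: both `(m - b) • H b • e m` and `-e m` are sent to `(m - b) • e m` by `b - D`, and
their difference is required to be the element `e b` of the kernel. This encoding avoids `D`. -/
def IsEigenfamily [AddCommGroup X] [Module 𝕜 X] [SMul 𝔸 X] (H : U → 𝔸) (e : U → X) : Prop :=
  ∀ b m : U, (m - b : 𝕜) • (H b • e m) = e b - e m

/-- The element `1 + (a - b) H b`, formally `(a - D) (b - D)⁻¹`, of a ring containing a
pseudo-resolvent. It sends the eigenvector with eigenvalue `a` to the one with eigenvalue `b`. -/
def spectralShift [Ring 𝔸] [Module 𝕜 𝔸] (H : U → 𝔸) (a b : U) : 𝔸 :=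
  1 + (a - b : 𝕜) • H b

section Algebra

variable [Ring 𝔸] [Algebra 𝕜 𝔸] {H : U → 𝔸}

lemma IsPseudoResolvent.commute (hH : IsPseudoResolvent H) (a b : U) :
    Commute (H a) (H b) := by
  rcases eq_or_ne a b with rfl | hab
  · rfl
  have hne : (b - a : 𝕜) ≠ 0 := sub_ne_zero.2 fun h => hab (Subtype.ext h.symm)
  refine smul_right_injective 𝔸 hne ?_
  change (b - a : 𝕜) • (H a * H b) = (b - a : 𝕜) • (H b * H a)
  rw [← hH a b, ← neg_sub (a : 𝕜), neg_smul, ← hH b a, neg_sub]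

lemma IsPseudoResolvent.spectralShift_mul_spectralShift (hH : IsPseudoResolvent H) (a b : U) :
    spectralShift H a b * spectralShift H b a = 1 := by
  have h : (a - b : 𝕜) • (H b - H a + (b - a : 𝕜) • (H b * H a)) = 0 := by
    rw [hH b a, ← add_smul, sub_add_sub_cancel, sub_self, zero_smul, smul_zero]
  calc spectralShift H a b * spectralShift H b a
      = 1 + (a - b : 𝕜) • (H b - H a + (b - a : 𝕜) • (H b * H a)) := by
        simp only [spectralShift, add_mul, mul_add, one_mul, mul_one, smul_mul_smul_comm]
        module
    _ = 1 := by rw [h, add_zero]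

variable [AddCommGroup X] [Module 𝕜 X] [Module 𝔸 X] [IsScalarTower 𝕜 𝔸 X] {e : U → X}

lemma IsEigenfamily.spectralShift_smul_self (he : IsEigenfamily H e) (a b : U) :
    spectralShift H a b • e a = e b := by
  rw [spectralShift, add_smul, one_smul, smul_assoc, he b a, add_sub_cancel]

lemma IsEigenfamily.spectralShift_smul_mem_span (he : IsEigenfamily H e) {a b : U} {T : Set U}
    (hb : b ∉ T) {x : X} (hx : x ∈ Submodule.span 𝕜 (e '' T)) :
    spectralShift H a b • x ∈ Submodule.span 𝕜 (e '' insert b T) := by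
  have hle : Submodule.span 𝕜 (e '' T) ≤ (Submodule.span 𝕜 (e '' insert b T)).comap
      (Algebra.lsmul 𝕜 𝕜 X (spectralShift H a b)) := by
    rw [Submodule.span_le]
    rintro _ ⟨m, hm, rfl⟩
    have hmb : (m - b : 𝕜) ≠ 0 := sub_ne_zero.2 fun h => hb (Subtype.ext h ▸ hm)
    have h_mem : ∀ c ∈ insert b T, e c ∈ Submodule.span 𝕜 (e '' insert b T) := fun c hc =>
      Submodule.subset_span (Set.mem_image_of_mem e hc)
    have hHe : H b • e m = (m - b : 𝕜)⁻¹ • (e b - e m) := by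
      rw [← he b m, inv_smul_smul₀ hmb]
    change spectralShift H a b • e m ∈ Submodule.span 𝕜 (e '' insert b T)
    rw [spectralShift, add_smul, one_smul, smul_assoc, hHe]
    exact add_mem (h_mem m (.inr hm)) (Submodule.smul_mem _ _ (Submodule.smul_mem _ _
      (sub_mem (h_mem b (.inl rfl)) (h_mem m (.inr hm)))))
  exact hle hx

end Algebra

section CommutativeAlgebra

variable [CommRing 𝔸] [Algebra 𝕜 𝔸] [AddCommGroup X] [Module 𝕜 X] [Module 𝔸 X]
  [IsScalarTower 𝕜 𝔸 X] {H : U → 𝔸} {e : U → X} {Λ Υ : ι → U}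

lemma IsEigenfamily.prod_spectralShift_smul_mem_span (he : IsEigenfamily H e)
    (hΥ : Function.Injective Υ) {n : ι} {s : Finset ι} (hn : n ∉ s) :
    (∏ i ∈ s, spectralShift H (Λ i) (Υ i)) • e (Υ n) ∈
      Submodule.span 𝕜 (e '' (Υ '' insert n s)) := by
  classical
  induction s using Finset.induction_on with
  | empty => simp
  | insert i s his ih =>
    rw [Finset.mem_insert, not_or] at hn
    have hi : Υ i ∉ Υ '' insert n (s : Set ι) := by
      rw [hΥ.mem_set_image]
      simpa [his] using Ne.symm hn.1
    rw [Finset.prod_insert his, mul_smul, Finset.coe_insert, Set.insert_comm, Set.image_insert_eq]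
    exact he.spectralShift_smul_mem_span hi (ih hn.2)

end CommutativeAlgebra

section CommutativeBanachAlgebra

variable [NormedCommRing 𝔸] [NormedAlgebra 𝕜 𝔸]
  [AddCommGroup X] [TopologicalSpace X] [IsTopologicalAddGroup X]
  [Module 𝕜 X] [ContinuousConstSMul 𝕜 X] [Module 𝔸 X] [ContinuousSMul 𝔸 X] [IsScalarTower 𝕜 𝔸 X]
  {H : U → 𝔸} {e : U → X} {Λ Υ : ι → U}

lemma IsEigenfamily.tprod_spectralShift_smul_eigenvector_mem_closedSpan (he : IsEigenfamily H e)
    (hΥ : Function.Injective Υ)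
    (hmul : Multipliable fun i => spectralShift H (Λ i) (Υ i)) (n : ι) :
    (∏' i, spectralShift H (Λ i) (Υ i)) • e (Λ n) ∈
      (Submodule.span 𝕜 (Set.range (e ∘ Υ))).topologicalClosure := by
  classical
  have hlim : Tendsto (fun s : Finset ι => (∏ i ∈ s, spectralShift H (Λ i) (Υ i)) • e (Λ n)) atTop
      (𝓝 ((∏' i, spectralShift H (Λ i) (Υ i)) • e (Λ n))) := hmul.hasProd.smul_const _
  refine mem_closure_of_tendsto hlim ?_
  filter_upwards [eventually_ge_atTop {n}] with s hs
  rw [← Finset.prod_erase_mul s _ (Finset.singleton_subset_iff.1 hs), mul_smul,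
    he.spectralShift_smul_self]
  refine Submodule.span_mono ?_ (he.prod_spectralShift_smul_mem_span hΥ (Finset.notMem_erase n s))
  rw [Set.range_comp]
  exact Set.image_mono (Set.image_subset_range _ _)

lemma IsEigenfamily.tprod_spectralShift_smul_mem_closedSpan (he : IsEigenfamily H e)
    (hΥ : Function.Injective Υ) (hmul : Multipliable fun i => spectralShift H (Λ i) (Υ i))
    {x : X} (hx : x ∈ (Submodule.span 𝕜 (Set.range (e ∘ Λ))).topologicalClosure) :
    (∏' i, spectralShift H (Λ i) (Υ i)) • x ∈
      (Submodule.span 𝕜 (Set.range (e ∘ Υ))).topologicalClosure := by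
  set V := (Submodule.span 𝕜 (Set.range (e ∘ Υ))).topologicalClosure
  let A : X →ₗ[𝕜] X := Algebra.lsmul 𝕜 𝕜 X (∏' i, spectralShift H (Λ i) (Υ i))
  have hclosed : IsClosed (V.comap A : Set X) :=
    (Submodule.isClosed_topologicalClosure _).preimage (continuous_const_smul _)
  have hspan : Submodule.span 𝕜 (Set.range (e ∘ Λ)) ≤ V.comap A := by
    rw [Submodule.span_le]
    rintro _ ⟨n, rfl⟩
    exact he.tprod_spectralShift_smul_eigenvector_mem_closedSpan hΥ hmul n
  exact Submodule.topologicalClosure_minimal _ hspan hclosed hx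

lemma IsPseudoResolvent.nonempty_closedSpan_equiv_of_multipliable (hH : IsPseudoResolvent H)
    (he : IsEigenfamily H e) (hΛ : Function.Injective Λ) (hΥ : Function.Injective Υ)
    (hmul : Multipliable fun i => spectralShift H (Λ i) (Υ i))
    (hmul' : Multipliable fun i => spectralShift H (Υ i) (Λ i)) :
    Nonempty ((Submodule.span 𝕜 (Set.range (e ∘ Λ))).topologicalClosure ≃L[𝕜]
      (Submodule.span 𝕜 (Set.range (e ∘ Υ))).topologicalClosure) := by
  have hinv : (∏' i, spectralShift H (Λ i) (Υ i)) * ∏' i, spectralShift H (Υ i) (Λ i) = 1 := by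
    rw [← hmul.tprod_mul hmul']
    simp only [hH.spectralShift_mul_spectralShift, tprod_one]
  let A : 𝔸ˣ := .mkOfMulEqOne _ _ hinv
  refine ⟨(ContinuousLinearEquiv.smulLeft A).ofSubmodules _ _ (le_antisymm ?_ fun y hy => ?_)⟩
  · rintro _ ⟨x, hx, rfl⟩
    exact he.tprod_spectralShift_smul_mem_closedSpan hΥ hmul hx
  · exact ⟨A⁻¹ • y, he.tprod_spectralShift_smul_mem_closedSpan hΛ hmul' hy, smul_inv_smul A y⟩

end CommutativeBanachAlgebra

lemma IsPseudoResolvent.nonempty_closedSpan_equiv {𝕜 X ι} [NontriviallyNormedField 𝕜] {U : Set 𝕜}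
    [NormedAddCommGroup X] [NormedSpace 𝕜 X] [CompleteSpace X]
    {H : U → X →L[𝕜] X} {e : U → X} {Λ Υ : ι → U}
    (hH : IsPseudoResolvent H) (he : IsEigenfamily H e)
    (hΛ : Function.Injective Λ) (hΥ : Function.Injective Υ)
    (hsum : Summable fun i => ‖(Λ i - Υ i : 𝕜) • H (Υ i)‖)
    (hsum' : Summable fun i => ‖(Υ i - Λ i : 𝕜) • H (Λ i)‖) :
    Nonempty ((Submodule.span 𝕜 (Set.range (e ∘ Λ))).topologicalClosure ≃L[𝕜]
      (Submodule.span 𝕜 (Set.range (e ∘ Υ))).topologicalClosure) := by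
  rcases subsingleton_or_nontrivial X with _ | _
  · exact ⟨.ofEq _ _ (Subsingleton.elim _ _)⟩
  -- `tprod` needs commutativity, which holds in the closed subalgebra generated by the `H b`.
  let S : Subalgebra 𝕜 (X →L[𝕜] X) := (Algebra.adjoin 𝕜 (Set.range H)).topologicalClosure
  have hcomm : IsMulCommutative (Algebra.adjoin 𝕜 (Set.range H)) :=
    Algebra.isMulCommutative_adjoin 𝕜 (by
      rintro _ ⟨a, rfl⟩ _ ⟨b, rfl⟩
      exact hH.commute a b)
  let _ : NormedCommRing S :=
    { (inferInstance : NormedRing S) with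
      mul_comm := (Subalgebra.commRingTopologicalClosure _ mul_comm').mul_comm }
  have : NormOneClass S := ⟨(norm_one : ‖(1 : X →L[𝕜] X)‖ = 1)⟩
  have : IsScalarTower 𝕜 S X := ⟨fun _ _ _ => rfl⟩
  have : ContinuousSMul S X := ⟨by
    change Continuous fun q : S × X => (q.1 : X →L[𝕜] X) q.2
    fun_prop⟩
  have : CompleteSpace S := (Subalgebra.isClosed_topologicalClosure _).completeSpace_coe
  let HS : U → S := fun b =>
    ⟨H b, Subalgebra.le_topologicalClosure _ (Algebra.subset_adjoin (Set.mem_range_self b))⟩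
  have hHS : IsPseudoResolvent HS := fun a b => Subtype.ext (hH a b)
  have heS : IsEigenfamily HS e := he
  exact hHS.nonempty_closedSpan_equiv_of_multipliable heS hΛ hΥ
    (multipliable_one_add_of_summable hsum) (multipliable_one_add_of_summable hsum')

end PseudoResolvent

section SchurTest

variable {α β γ E : Type*} [MeasurableSpace α] [MeasurableSpace β] [MeasurableSpace γ]
  {μ : Measure α} {ν : Measure β} {ρ : Measure γ}

lemma rpow_lintegral_mul_le {k g : α → ℝ≥0∞} (hk : Measurable k) (hg : Measurable g) {r : ℝ}
    (hr : 1 ≤ r) :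
    (∫⁻ s, k s * g s ∂μ) ^ r ≤ (∫⁻ s, k s ∂μ) ^ (r - 1) * ∫⁻ s, k s * g s ^ r ∂μ := by
  have hr0 : 0 < r := one_pos.trans_le hr
  have h := eLpNorm'_le_eLpNorm'_mul_rpow_measure_univ one_pos hr
    (hg.aestronglyMeasurable (μ := μ.withDensity k))
  simp only [eLpNorm', enorm_eq_self, ENNReal.rpow_one, div_one, withDensity_apply _ .univ,
    Measure.restrict_univ, lintegral_withDensity_eq_lintegral_mul _ hk hg,
    lintegral_withDensity_eq_lintegral_mul _ hk (hg.pow_const r), Pi.mul_apply] at h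
  calc (∫⁻ s, k s * g s ∂μ) ^ r
      ≤ ((∫⁻ s, k s * g s ^ r ∂μ) ^ (1 / r) * (∫⁻ s, k s ∂μ) ^ (1 - 1 / r)) ^ r := by gcongr
    _ = (∫⁻ s, k s ∂μ) ^ (r - 1) * ∫⁻ s, k s * g s ^ r ∂μ := by
        rw [ENNReal.mul_rpow_of_nonneg _ _ hr0.le, ← ENNReal.rpow_mul, ← ENNReal.rpow_mul,
          one_div_mul_cancel hr0.ne', ENNReal.rpow_one, sub_mul, one_mul,
          one_div_mul_cancel hr0.ne', mul_comm]

/-- The hypotheses of the Schur test: a measurable kernel on `α × β` whose absolute row and column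
integrals are almost everywhere at most `C`. A common bound for rows and columns makes `C` bound
the integral operator from `L_p(ν)` to `L_p(μ)` for every `p ∈ [1, ∞]` at once. -/
structure IsSchurKernel (K : α → β → ℝ) (μ : Measure α) (ν : Measure β) (C : ℝ≥0) : Prop where
  measurable : Measurable (Function.uncurry K)
  lintegral_row_le : ∀ᵐ t ∂μ, ∫⁻ s, ‖K t s‖ₑ ∂ν ≤ C
  lintegral_col_le : ∀ᵐ s ∂ν, ∫⁻ t, ‖K t s‖ₑ ∂μ ≤ C

namespace IsSchurKernel

variable {K : α → β → ℝ} {L : β → γ → ℝ} {C D : ℝ≥0}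

lemma measurable_row (hK : IsSchurKernel K μ ν C) (t : α) : Measurable (K t) :=
  hK.measurable.comp measurable_prodMk_left

lemma measurable_col (hK : IsSchurKernel K μ ν C) (s : β) : Measurable fun t => K t s :=
  hK.measurable.comp measurable_prodMk_right

lemma lintegral_lintegral_mul_le [SFinite μ] [SFinite ν] (hK : IsSchurKernel K μ ν C)
    {g : β → ℝ≥0∞} (hg : Measurable g) :
    ∫⁻ t, ∫⁻ s, ‖K t s‖ₑ * g s ∂ν ∂μ ≤ C * ∫⁻ s, g s ∂ν := by
  have hmeas : Measurable (Function.uncurry fun t s => ‖K t s‖ₑ * g s) :=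
    hK.measurable.enorm.mul (hg.comp measurable_snd)
  rw [lintegral_lintegral_swap hmeas.aemeasurable, ← lintegral_const_mul _ hg]
  refine lintegral_mono_ae ?_
  filter_upwards [hK.lintegral_col_le] with s hs
  rw [lintegral_mul_const _ (hK.measurable_col s).enorm]
  gcongr

lemma lintegral_rpow_lintegral_mul_le [SFinite μ] [SFinite ν] (hK : IsSchurKernel K μ ν C)
    {g : β → ℝ≥0∞} (hg : Measurable g) {r : ℝ} (hr : 1 ≤ r) :
    ∫⁻ t, (∫⁻ s, ‖K t s‖ₑ * g s ∂ν) ^ r ∂μ ≤ C ^ r * ∫⁻ s, g s ^ r ∂ν := by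
  calc ∫⁻ t, (∫⁻ s, ‖K t s‖ₑ * g s ∂ν) ^ r ∂μ
      ≤ ∫⁻ t, C ^ (r - 1) * ∫⁻ s, ‖K t s‖ₑ * g s ^ r ∂ν ∂μ := by
        refine lintegral_mono_ae ?_
        filter_upwards [hK.lintegral_row_le] with t ht
        have : 0 ≤ r - 1 := sub_nonneg.2 hr
        refine (rpow_lintegral_mul_le (hK.measurable_row t).enorm hg hr).trans ?_
        gcongr
    _ = C ^ (r - 1) * ∫⁻ t, ∫⁻ s, ‖K t s‖ₑ * g s ^ r ∂ν ∂μ :=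
        lintegral_const_mul' _ _ (ENNReal.rpow_ne_top_of_nonneg (sub_nonneg.2 hr) (by simp))
    _ ≤ C ^ (r - 1) * (C * ∫⁻ s, g s ^ r ∂ν) := by
        gcongr
        exact hK.lintegral_lintegral_mul_le (hg.pow_const r)
    _ = C ^ r * ∫⁻ s, g s ^ r ∂ν := by
        rw [← mul_assoc]
        nth_rw 2 [← ENNReal.rpow_one (C : ℝ≥0∞)]
        rw [← ENNReal.rpow_add_of_nonneg _ _ (sub_nonneg.2 hr) zero_le_one, sub_add_cancel]

lemma eLpNorm_lintegral_mul_le [SFinite μ] [SFinite ν] (hK : IsSchurKernel K μ ν C)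
    {g : β → ℝ≥0∞} (hg : Measurable g) {p : ℝ≥0∞} (hp : 1 ≤ p) :
    eLpNorm (fun t => ∫⁻ s, ‖K t s‖ₑ * g s ∂ν) p μ ≤ C * eLpNorm g p ν := by
  rcases eq_or_ne p ∞ with rfl | hp_top
  · simp only [eLpNorm_exponent_top]
    refine essSup_le_of_ae_le _ ?_
    filter_upwards [hK.lintegral_row_le] with t ht
    calc ∫⁻ s, ‖K t s‖ₑ * g s ∂ν ≤ ∫⁻ s, ‖K t s‖ₑ * eLpNormEssSup g ν ∂ν := by
          refine lintegral_mono_ae ?_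
          filter_upwards [enorm_ae_le_eLpNormEssSup g ν] with s hs
          gcongr
          exact hs
      _ = (∫⁻ s, ‖K t s‖ₑ ∂ν) * eLpNormEssSup g ν :=
          lintegral_mul_const _ (hK.measurable_row t).enorm
      _ ≤ C * eLpNormEssSup g ν := by gcongr
  · have hp0 : p ≠ 0 := (one_pos.trans_le hp).ne'
    have hr : 1 ≤ p.toReal := ENNReal.toReal_mono hp_top hp
    have hr0 : 0 < p.toReal := one_pos.trans_le hr
    simp only [eLpNorm_eq_lintegral_rpow_enorm_toReal hp0 hp_top, enorm_eq_self]
    calc (∫⁻ t, (∫⁻ s, ‖K t s‖ₑ * g s ∂ν) ^ p.toReal ∂μ) ^ (1 / p.toReal)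
        ≤ (C ^ p.toReal * ∫⁻ s, g s ^ p.toReal ∂ν) ^ (1 / p.toReal) := by
          gcongr
          exact hK.lintegral_rpow_lintegral_mul_le hg hr
      _ = C * (∫⁻ s, g s ^ p.toReal ∂ν) ^ (1 / p.toReal) := by
          rw [ENNReal.mul_rpow_of_nonneg _ _ (by positivity), ← ENNReal.rpow_mul,
            mul_one_div_cancel hr0.ne', ENNReal.rpow_one]

lemma ae_lintegral_mul_lt_top [SFinite μ] [SFinite ν] (hK : IsSchurKernel K μ ν C)
    {g : β → ℝ≥0∞} (hg : Measurable g) {p : ℝ≥0∞} (hp : 1 ≤ p) (hgp : eLpNorm g p ν < ∞) :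
    ∀ᵐ t ∂μ, ∫⁻ s, ‖K t s‖ₑ * g s ∂ν < ∞ := by
  have hfin : eLpNorm (fun t => ∫⁻ s, ‖K t s‖ₑ * g s ∂ν) p μ < ∞ :=
    (hK.eLpNorm_lintegral_mul_le hg hp).trans_lt (ENNReal.mul_lt_top ENNReal.coe_lt_top hgp)
  rcases eq_or_ne p ∞ with rfl | hp_top
  · filter_upwards [enorm_ae_le_eLpNormEssSup (fun t => ∫⁻ s, ‖K t s‖ₑ * g s ∂ν) μ] with t ht
    exact ht.trans_lt hfin
  · have hp0 : p ≠ 0 := (one_pos.trans_le hp).ne'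
    have hmeas : Measurable fun t => ∫⁻ s, ‖K t s‖ₑ * g s ∂ν :=
      (hK.measurable.enorm.mul (hg.comp measurable_snd)).lintegral_prod_right'
    have h := lintegral_rpow_enorm_lt_top_of_eLpNorm_lt_top hp0 hp_top hfin
    filter_upwards [ae_lt_top (hmeas.enorm.pow_const _) h.ne] with t ht
    exact (ENNReal.rpow_lt_top_iff_of_pos (ENNReal.toReal_pos hp0 hp_top)).1 ht

variable [NormedAddCommGroup E] [NormedSpace ℝ E] {p : ℝ≥0∞}

lemma eLpNorm_integral_smul_le [SFinite μ] [SFinite ν] (hK : IsSchurKernel K μ ν C)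
    {f : β → E} (hf : StronglyMeasurable f) (hp : 1 ≤ p) :
    eLpNorm (fun t => ∫ s, K t s • f s ∂ν) p μ ≤ C * eLpNorm f p ν := by
  calc eLpNorm (fun t => ∫ s, K t s • f s ∂ν) p μ
      ≤ eLpNorm (fun t => ∫⁻ s, ‖K t s‖ₑ * ‖f s‖ₑ ∂ν) p μ := by
        refine eLpNorm_mono_enorm fun t => ?_
        simpa only [enorm_smul, enorm_eq_self] using
          enorm_integral_le_lintegral_enorm fun s => K t s • f s
    _ ≤ C * eLpNorm f p ν := by
        simpa only [eLpNorm_enorm] using hK.eLpNorm_lintegral_mul_le hf.enorm hp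

variable [Fact (1 ≤ p)] [SFinite μ] [SFinite ν] [SFinite ρ]

lemma ae_integrable_smul (hK : IsSchurKernel K μ ν C) (f : Lp E p ν) :
    ∀ᵐ t ∂μ, Integrable (fun s => K t s • f s) ν := by
  have hf := Lp.stronglyMeasurable f
  filter_upwards [hK.ae_lintegral_mul_lt_top (p := p) hf.enorm Fact.out
    (by simpa only [eLpNorm_enorm] using Lp.eLpNorm_lt_top f)] with t ht
  refine ⟨((hK.measurable_row t).stronglyMeasurable.smul hf).aestronglyMeasurable, ?_⟩
  simpa only [HasFiniteIntegral, enorm_smul] using ht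

lemma memLp_integral_smul (hK : IsSchurKernel K μ ν C) (f : Lp E p ν) :
    MemLp (fun t => ∫ s, K t s • f s ∂ν) p μ := by
  have hf := Lp.stronglyMeasurable f
  exact ⟨(hK.measurable.stronglyMeasurable.smul
      (hf.comp_measurable measurable_snd)).integral_prod_right'.aestronglyMeasurable,
    (hK.eLpNorm_integral_smul_le hf Fact.out).trans_lt
      (ENNReal.mul_lt_top ENNReal.coe_lt_top (Lp.eLpNorm_lt_top f))⟩

lemma norm_toLp_integral_smul_le (hK : IsSchurKernel K μ ν C) (f : Lp E p ν) :
    ‖(hK.memLp_integral_smul f).toLp _‖ ≤ C * ‖f‖ := by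
  rw [Lp.norm_toLp, Lp.norm_def, ← ENNReal.coe_toReal, ← ENNReal.toReal_mul]
  exact ENNReal.toReal_mono (ENNReal.mul_ne_top ENNReal.coe_ne_top (Lp.eLpNorm_ne_top f))
    (hK.eLpNorm_integral_smul_le (Lp.stronglyMeasurable f) Fact.out)

variable (p)

/-- The operator `f ↦ ∫ K(·, s) f(s) dν(s)` from `L_p(ν)` to `L_p(μ)` with Schur kernel `K`. -/
noncomputable def toCLM (hK : IsSchurKernel K μ ν C) : Lp E p ν →L[ℝ] Lp E p μ :=
  LinearMap.mkContinuous
    { toFun f := (hK.memLp_integral_smul f).toLp _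
      map_add' f g := by
        rw [← MemLp.toLp_add, MemLp.toLp_eq_toLp_iff]
        filter_upwards [hK.ae_integrable_smul f, hK.ae_integrable_smul g] with t hf hg
        rw [Pi.add_apply, ← integral_add hf hg]
        refine integral_congr_ae ?_
        filter_upwards [Lp.coeFn_add f g] with s hs
        rw [hs, Pi.add_apply, smul_add]
      map_smul' c f := by
        rw [RingHom.id_apply, ← MemLp.toLp_const_smul, MemLp.toLp_eq_toLp_iff]
        refine .of_forall fun t => ?_
        rw [Pi.smul_apply, ← integral_smul]
        refine integral_congr_ae ?_
        filter_upwards [Lp.coeFn_smul c f] with s hs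
        rw [hs, Pi.smul_apply, smul_comm] }
    C hK.norm_toLp_integral_smul_le

lemma norm_toCLM_le (hK : IsSchurKernel K μ ν C) :
    ‖(hK.toCLM p : Lp E p ν →L[ℝ] Lp E p μ)‖ ≤ C :=
  LinearMap.mkContinuous_norm_le _ C.coe_nonneg hK.norm_toLp_integral_smul_le

variable {p}

lemma coeFn_toCLM (hK : IsSchurKernel K μ ν C) (f : Lp E p ν) :
    hK.toCLM p f =ᵐ[μ] fun t => ∫ s, K t s • f s ∂ν :=
  (hK.memLp_integral_smul f).coeFn_toLp

lemma coeFn_toCLM_toCLM [CompleteSpace E] (hK : IsSchurKernel K μ ν C) (hL : IsSchurKernel L ν ρ D)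
    (f : Lp E p ρ) :
    hK.toCLM p (hL.toCLM p f) =ᵐ[μ] fun t => ∫ u, (∫ s, K t s * L s u ∂ν) • f u ∂ρ := by
  have hf := Lp.stronglyMeasurable f
  have hmeas : Measurable fun s => ∫⁻ u, ‖L s u‖ₑ * ‖f u‖ₑ ∂ρ :=
    (hL.measurable.enorm.mul (hf.enorm.comp measurable_snd)).lintegral_prod_right'
  have hfin : eLpNorm (fun s => ∫⁻ u, ‖L s u‖ₑ * ‖f u‖ₑ ∂ρ) p ν < ∞ :=
    (hL.eLpNorm_lintegral_mul_le hf.enorm Fact.out).trans_lt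
      (ENNReal.mul_lt_top ENNReal.coe_lt_top (by simpa using Lp.eLpNorm_lt_top f))
  filter_upwards [hK.coeFn_toCLM (hL.toCLM p f),
    hK.ae_lintegral_mul_lt_top hmeas Fact.out hfin] with t ht ht_fin
  have h_int : Integrable (Function.uncurry fun s u => (K t s * L s u) • f u) (ν.prod ρ) := by
    have hm : StronglyMeasurable (Function.uncurry fun s u => (K t s * L s u) • f u) :=
      (((hK.measurable_row t).comp measurable_fst).mul hL.measurable).stronglyMeasurable.smul
        (hf.comp_measurable measurable_snd)
    refine ⟨hm.aestronglyMeasurable, ?_⟩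
    rw [HasFiniteIntegral, lintegral_prod _ hm.enorm.aemeasurable]
    refine lt_of_eq_of_lt (lintegral_congr fun s => ?_) ht_fin
    simp only [Function.uncurry, enorm_smul, enorm_mul, mul_assoc]
    exact lintegral_const_mul' _ _ enorm_ne_top
  calc hK.toCLM p (hL.toCLM p f) t
      = ∫ s, ∫ u, (K t s * L s u) • f u ∂ρ ∂ν := by
        rw [ht]
        refine integral_congr_ae ?_
        filter_upwards [hL.coeFn_toCLM f] with s hs
        simp only [hs, mul_smul, integral_smul]
    _ = ∫ u, (∫ s, K t s * L s u ∂ν) • f u ∂ρ := by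
        rw [integral_integral_swap h_int]
        simp only [integral_smul_const]

end IsSchurKernel

end SchurTest

section HardyKernel

/-- The kernel of `(b - t d/dt)⁻¹` on `(0, 1]` with boundary condition `f(1) = 0`, with respect to
Lebesgue measure: solving `b f - t f' = g` gives `f(t) = ∫ₜ¹ (t / s) ^ b g(s) ds / s`. -/
noncomputable def hardyKernel (b t s : ℝ) : ℝ :=
  if t < s then (t / s) ^ b / s else 0

variable {a b t s u : ℝ}

lemma measurable_hardyKernel (b : ℝ) : Measurable (Function.uncurry (hardyKernel b)) := by
  unfold hardyKernel Function.uncurry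
  refine Measurable.ite (measurableSet_lt measurable_fst measurable_snd) ?_ measurable_const
  fun_prop

lemma hardyKernel_nonneg (ht : 0 ≤ t) : 0 ≤ hardyKernel b t s := by
  unfold hardyKernel
  split_ifs with h
  · have := ht.trans_lt h
    positivity
  · rfl

lemma hardyKernel_le_inv (hb : 0 ≤ b) (ht : 0 ≤ t) (hs : 0 ≤ s) : hardyKernel b t s ≤ s⁻¹ := by
  unfold hardyKernel
  split_ifs with h
  · rw [← one_div]
    gcongr
    exact Real.rpow_le_one (by positivity) (div_le_one_of_le₀ h.le hs) hb
  · positivity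

lemma hardyKernel_mul_hardyKernel (ht : 0 < t) :
    hardyKernel a t s * hardyKernel b s u =
      (Set.Ioo t u).indicator (fun s => t ^ a * (u ^ b * u)⁻¹ * s ^ (b - a - 1)) s := by
  simp only [hardyKernel, Set.indicator, Set.mem_Ioo]
  rcases lt_or_ge t s with hts | hts
  · rcases lt_or_ge s u with hsu | hsu
    · have hs := ht.trans hts
      have hu := hs.trans hsu
      rw [if_pos hts, if_pos hsu, if_pos ⟨hts, hsu⟩, Real.div_rpow ht.le hs.le,
        Real.div_rpow hs.le hu.le, Real.rpow_sub_one hs.ne', Real.rpow_sub hs]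
      field_simp
    · simp [hsu.not_gt]
  · simp [hts.not_gt]

lemma integral_rpow_sub_one (ht : 0 < t) (htu : t ≤ u) (c : ℝ) :
    c * ∫ s in t..u, s ^ (c - 1) = u ^ c - t ^ c := by
  rcases eq_or_ne c 0 with rfl | hc
  · simp
  have h0 : (0 : ℝ) ∉ Set.uIcc t u := by
    rw [Set.uIcc_of_le htu]
    exact fun h => h.1.not_gt ht
  rw [integral_rpow (.inr ⟨fun h => hc (by linarith), h0⟩), sub_add_cancel, mul_div_cancel₀ _ hc]

lemma integral_hardyKernel_mul_hardyKernel (a b : ℝ) (ht : 0 < t) (hu : u ≤ 1) :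
    (b - a) * ∫ s in Set.Icc 0 1, hardyKernel a t s * hardyKernel b s u =
      hardyKernel a t u - hardyKernel b t u := by
  have hsub : Set.Icc 0 1 ∩ Set.Ioo t u = Set.Ioo t u :=
    Set.inter_eq_right.2 fun s hs => ⟨(ht.trans hs.1).le, hs.2.le.trans hu⟩
  simp only [hardyKernel_mul_hardyKernel ht]
  rw [setIntegral_indicator measurableSet_Ioo, hsub, integral_const_mul]
  rcases lt_or_ge t u with htu | hut
  · have hu0 := ht.trans htu
    rw [← integral_Ioc_eq_integral_Ioo, ← intervalIntegral.integral_of_le htu.le,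
      mul_left_comm, integral_rpow_sub_one ht htu.le]
    simp only [hardyKernel, if_pos htu, Real.div_rpow ht.le hu0.le, Real.rpow_sub ht,
      Real.rpow_sub hu0]
    field_simp
  · simp [hardyKernel, hut.not_gt]

lemma integral_hardyKernel_mul_rpow (b m : ℝ) (ht : 0 < t) (ht1 : t ≤ 1) :
    (m - b) * ∫ s in Set.Icc 0 1, hardyKernel b t s * s ^ m = t ^ b - t ^ m := by
  -- `s ^ m` is the column at `u = 1` of the kernel, so this is the resolvent identity at `u = 1`.
  have hone {c r : ℝ} (hr : r < 1) : hardyKernel c r 1 = r ^ c := by simp [hardyKernel, hr]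
  rcases ht1.eq_or_lt with rfl | ht1
  · have h0 : ∫ s in Set.Icc 0 1, hardyKernel b 1 s * s ^ m = 0 :=
      setIntegral_eq_zero_of_forall_eq_zero fun s hs => by simp [hardyKernel, hs.2.not_gt]
    simp [h0]
  · rw [← hone ht1, ← hone ht1, ← integral_hardyKernel_mul_hardyKernel b m ht le_rfl]
    congr 1
    rw [integral_Icc_eq_integral_Ico, integral_Icc_eq_integral_Ico]
    exact setIntegral_congr_fun measurableSet_Ico fun s hs => by simp only [hone hs.2]

lemma integrableOn_hardyKernel_row (hb : 0 ≤ b) (ht : 0 < t) :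
    IntegrableOn (hardyKernel b t) (Set.Icc 0 1) := by
  refine Integrable.of_bound
    ((measurable_hardyKernel b).comp measurable_prodMk_left).aestronglyMeasurable t⁻¹
    (.of_forall fun s => ?_)
  rw [Real.norm_of_nonneg (hardyKernel_nonneg ht.le)]
  rcases lt_or_ge t s with hts | hst
  · exact (hardyKernel_le_inv hb ht.le (ht.trans hts).le).trans (inv_anti₀ ht hts.le)
  · simpa [hardyKernel, hst.not_gt] using ht.le

lemma lintegral_hardyKernel_row_le (hb : 0 < b) (ht : 0 < t) (ht1 : t ≤ 1) :
    ∫⁻ s in Set.Icc 0 1, ‖hardyKernel b t s‖ₑ ≤ ENNReal.ofReal b⁻¹ := by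
  rw [← ofReal_integral_norm_eq_lintegral_enorm (integrableOn_hardyKernel_row hb.le ht)]
  simp only [Real.norm_of_nonneg (hardyKernel_nonneg ht.le)]
  have h := integral_hardyKernel_mul_rpow b 0 ht ht1
  simp only [Real.rpow_zero, mul_one, zero_sub] at h
  gcongr
  rw [← one_div, le_div_iff₀' hb]
  linarith [Real.rpow_nonneg ht.le b]

lemma lintegral_hardyKernel_col_le (hb : 0 < b) (hs : 0 < s) (hs1 : s ≤ 1) :
    ∫⁻ t in Set.Icc 0 1, ‖hardyKernel b t s‖ₑ ≤ ENNReal.ofReal b⁻¹ := by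
  have hnorm : ∀ t ∈ Set.Icc (0 : ℝ) 1,
      ‖hardyKernel b t s‖ = (Set.Iio s).indicator (fun t => (t / s) ^ b / s) t := by
    intro t ht
    rw [Real.norm_of_nonneg (hardyKernel_nonneg ht.1)]
    rfl
  have h_int : IntegrableOn (fun t => hardyKernel b t s) (Set.Icc 0 1) := by
    refine Measure.integrableOn_of_bounded (M := s⁻¹) (by simp)
      ((measurable_hardyKernel b).comp measurable_prodMk_right).aestronglyMeasurable ?_
    filter_upwards [ae_restrict_mem measurableSet_Icc] with t ht
    rw [Real.norm_of_nonneg (hardyKernel_nonneg ht.1)]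
    exact hardyKernel_le_inv hb.le ht.1 hs.le
  have hset : Set.Icc 0 1 ∩ Set.Iio s = Set.Ico 0 s := by
    ext t
    exact ⟨fun h => ⟨h.1.1, h.2⟩, fun h => ⟨⟨h.1, h.2.le.trans hs1⟩, h.2⟩⟩
  rw [← ofReal_integral_norm_eq_lintegral_enorm h_int]
  gcongr
  calc ∫ t in Set.Icc 0 1, ‖hardyKernel b t s‖
      = ∫ t in 0..s, (t / s) ^ b / s := by
        rw [setIntegral_congr_fun measurableSet_Icc hnorm, setIntegral_indicator measurableSet_Iio,
          hset, integral_Ico_eq_integral_Ioo, ← integral_Ioc_eq_integral_Ioo,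
          intervalIntegral.integral_of_le hs.le]
    _ = (b + 1)⁻¹ := by
        rw [intervalIntegral.integral_div, intervalIntegral.integral_comp_div (· ^ b) hs.ne',
          zero_div, div_self hs.ne', integral_rpow (.inl (by linarith)), smul_eq_mul,
          mul_div_cancel_left₀ _ hs.ne', Real.one_rpow, Real.zero_rpow (by linarith), sub_zero,
          one_div]
    _ ≤ b⁻¹ := by gcongr; linarith

end HardyKernel

section HardyResolvent

lemma ae_mem_Ioc_of_restrict_Icc :
    ∀ᵐ t ∂volume.restrict (Set.Icc (0 : ℝ) 1), t ∈ Set.Ioc (0 : ℝ) 1 := by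
  rw [← restrict_Ioc_eq_restrict_Icc]
  exact ae_restrict_mem measurableSet_Ioc

lemma isSchurKernel_hardyKernel {b : ℝ} (hb : 0 < b) :
    IsSchurKernel (hardyKernel b) (volume.restrict (Set.Icc 0 1)) (volume.restrict (Set.Icc 0 1))
      (b⁻¹).toNNReal where
  measurable := measurable_hardyKernel b
  lintegral_row_le := ae_mem_Ioc_of_restrict_Icc.mono fun _ ht =>
    lintegral_hardyKernel_row_le hb ht.1 ht.2
  lintegral_col_le := ae_mem_Ioc_of_restrict_Icc.mono fun _ hs =>
    lintegral_hardyKernel_col_le hb hs.1 hs.2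

lemma memLp_rpow (p : ℝ≥0∞) {m : ℝ} (hm : 0 ≤ m) :
    MemLp (fun t : ℝ => t ^ m) p (volume.restrict (Set.Icc 0 1)) := by
  refine MemLp.of_bound (by fun_prop) 1 ?_
  filter_upwards [ae_restrict_mem measurableSet_Icc] with t ht
  rw [Real.norm_of_nonneg (Real.rpow_nonneg ht.1 m)]
  exact Real.rpow_le_one ht.1 ht.2 hm

/-- The monomial `t ↦ t ^ m` as an element of `L_p([0,1])`, for `m > 0`. -/
noncomputable def monomialLp (p : ℝ≥0∞) (m : Set.Ioi (0 : ℝ)) :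
    Lp ℝ p (volume.restrict (Set.Icc (0 : ℝ) 1)) :=
  (memLp_rpow p (le_of_lt m.2)).toLp _

lemma coeFn_monomialLp (p : ℝ≥0∞) (m : Set.Ioi (0 : ℝ)) :
    monomialLp p m =ᵐ[volume.restrict (Set.Icc 0 1)] fun t => t ^ (m : ℝ) :=
  MemLp.coeFn_toLp _

variable (p : ℝ≥0∞) [Fact (1 ≤ p)]

/-- The operator `(b - t d/dt)⁻¹` on `L_p([0,1])` with boundary condition `f(1) = 0`, realised for
`b > 0` as the integral operator with kernel `hardyKernel b`. -/
noncomputable def hardyResolvent (b : Set.Ioi (0 : ℝ)) :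
    Lp ℝ p (volume.restrict (Set.Icc (0 : ℝ) 1)) →L[ℝ]
      Lp ℝ p (volume.restrict (Set.Icc (0 : ℝ) 1)) :=
  (isSchurKernel_hardyKernel b.2).toCLM p

lemma norm_hardyResolvent_le (b : Set.Ioi (0 : ℝ)) : ‖hardyResolvent p b‖ ≤ (b : ℝ)⁻¹ := by
  have hb : (0 : ℝ) ≤ (b : ℝ)⁻¹ := inv_nonneg.2 (le_of_lt b.2)
  exact ((isSchurKernel_hardyKernel b.2).norm_toCLM_le p).trans_eq (Real.coe_toNNReal _ hb)

lemma isPseudoResolvent_hardyResolvent : IsPseudoResolvent (hardyResolvent p) := by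
  intro a b
  ext f
  have ha := isSchurKernel_hardyKernel a.2
  have hb := isSchurKernel_hardyKernel b.2
  filter_upwards [ae_mem_Ioc_of_restrict_Icc, ha.coeFn_toCLM f, hb.coeFn_toCLM f,
    ha.coeFn_toCLM_toCLM hb f, ha.ae_integrable_smul f, hb.ae_integrable_smul f,
    Lp.coeFn_sub (hardyResolvent p a f) (hardyResolvent p b f),
    Lp.coeFn_smul (b - a : ℝ) (hardyResolvent p a (hardyResolvent p b f))]
    with t ht hat hbt habt h_int_a h_int_b hsub hsmul
  change (hardyResolvent p a f - hardyResolvent p b f :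
    Lp ℝ p (volume.restrict (Set.Icc (0 : ℝ) 1))) t =
    ((b - a : ℝ) • hardyResolvent p a (hardyResolvent p b f) : Lp ℝ p _) t
  rw [hsub, hsmul, Pi.sub_apply, Pi.smul_apply, hardyResolvent, hardyResolvent, hat, hbt, habt,
    ← integral_sub h_int_a h_int_b, ← integral_smul]
  refine setIntegral_congr_fun measurableSet_Icc fun u hu => ?_
  simp only [smul_eq_mul]
  rw [← mul_assoc, integral_hardyKernel_mul_hardyKernel _ _ ht.1 hu.2, sub_mul]

lemma isEigenfamily_hardyResolvent_monomialLp :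
    IsEigenfamily (hardyResolvent p) (monomialLp p) := by
  intro b m
  refine Lp.ext ?_
  filter_upwards [ae_mem_Ioc_of_restrict_Icc,
    (isSchurKernel_hardyKernel b.2).coeFn_toCLM (monomialLp p m), coeFn_monomialLp p b,
    coeFn_monomialLp p m, Lp.coeFn_sub (monomialLp p b) (monomialLp p m),
    Lp.coeFn_smul (m - b : ℝ) (hardyResolvent p b (monomialLp p m))]
    with t ht hH hbt hmt hsub hsmul
  have h_int : ∫ s in Set.Icc 0 1, hardyKernel b t s • monomialLp p m s =
      ∫ s in Set.Icc 0 1, hardyKernel b t s * s ^ (m : ℝ) :=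
    integral_congr_ae ((coeFn_monomialLp p m).mono fun s hs => by simp only [hs, smul_eq_mul])
  rw [hsub, Pi.sub_apply, hbt, hmt, ContinuousLinearMap.smul_def, hsmul, Pi.smul_apply,
    hardyResolvent, hH, h_int, smul_eq_mul, integral_hardyKernel_mul_rpow _ _ ht.1 ht.2]

end HardyResolvent

section MuntzSpace

variable {ι : Type*}

lemma muntzSpace_eq_closedSpan_monomialLp (p : ℝ≥0∞) [Fact (1 ≤ p)] (Λ : ι → Set.Ioi (0 : ℝ)) :
    muntzSpace (Set.range fun i => (Λ i : ℝ)) p 0 1 =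
      (Submodule.span ℝ (Set.range (monomialLp p ∘ Λ))).topologicalClosure := by
  unfold muntzSpace
  congr 2
  ext g
  constructor
  · rintro ⟨_, ⟨i, rfl⟩, hg⟩
    exact ⟨i, Lp.ext ((coeFn_monomialLp p (Λ i)).trans hg.symm)⟩
  · rintro ⟨i, rfl⟩
    exact ⟨Λ i, ⟨i, rfl⟩, coeFn_monomialLp p (Λ i)⟩

lemma summable_abs_sub_div_symm {x y : ι → ℝ} (hx : ∀ i, 0 < x i) (hy : ∀ i, 0 < y i)
    (h : Summable fun i => |y i - x i| / x i) : Summable fun i => |x i - y i| / y i := by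
  refine Summable.of_norm_bounded_eventually (h.mul_left 2) ?_
  filter_upwards [h.tendsto_cofinite_zero.eventually_le_const one_half_pos] with i hi
  have hxi := hx i
  have hyi := hy i
  have hle : x i ≤ 2 * y i := by
    rw [div_le_iff₀ hxi] at hi
    linarith [neg_abs_le (y i - x i)]
  rw [Real.norm_of_nonneg (by positivity), abs_sub_comm, ← mul_div_assoc, div_le_div_iff₀ hyi hxi]
  nlinarith [abs_nonneg (y i - x i)]

lemma summable_abs_sub_div_of_abs_sub_le {x y : ι → ℝ} {δ : ℝ} (hx : ∀ i, 0 < x i)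
    (hδ : ∀ i, |y i - x i| ≤ δ) (h : Summable fun i => 1 / x i) :
    Summable fun i => |y i - x i| / x i := by
  refine (h.mul_left δ).of_nonneg_of_le (fun i => div_nonneg (abs_nonneg _) (hx i).le) fun i => ?_
  rw [mul_one_div]
  exact div_le_div_of_nonneg_right (hδ i) (hx i).le

lemma summable_norm_sub_smul_hardyResolvent (p : ℝ≥0∞) [Fact (1 ≤ p)]
    {Λ Υ : ι → Set.Ioi (0 : ℝ)} (h : Summable fun i => |(Λ i - Υ i : ℝ)| / Υ i) :
    Summable fun i => ‖(Λ i - Υ i : ℝ) • hardyResolvent p (Υ i)‖ := by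
  refine h.of_nonneg_of_le (fun i => norm_nonneg _) fun i => ?_
  rw [norm_smul, Real.norm_eq_abs, div_eq_mul_inv]
  gcongr
  exact norm_hardyResolvent_le p (Υ i)

theorem muntzSpace_isomorphic_of_sup_diff_small_general (Λ Υ : ι → ℝ)
    (hΛpos : ∀ i, 0 < Λ i) (hΥpos : ∀ i, 0 < Υ i)
    (hΛinj : Function.Injective Λ) (hΥinj : Function.Injective Υ)
    (hsum : Summable fun i => |Υ i - Λ i| / Λ i) (p : ℝ≥0∞) [Fact (1 ≤ p)] :
    Nonempty (muntzSpace (Set.range Λ) p 0 1 ≃L[ℝ] muntzSpace (Set.range Υ) p 0 1) := by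
  lift Λ to ι → Set.Ioi (0 : ℝ) using hΛpos
  lift Υ to ι → Set.Ioi (0 : ℝ) using hΥpos
  rw [muntzSpace_eq_closedSpan_monomialLp, muntzSpace_eq_closedSpan_monomialLp]
  exact (isPseudoResolvent_hardyResolvent p).nonempty_closedSpan_equiv
    (isEigenfamily_hardyResolvent_monomialLp p) hΛinj.of_comp hΥinj.of_comp
    (summable_norm_sub_smul_hardyResolvent p
      (summable_abs_sub_div_symm (fun i => (Λ i).2) (fun i => (Υ i).2) hsum))
    (summable_norm_sub_smul_hardyResolvent p hsum)

end MuntzSpace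

/-- If `Λ`, `Υ` are strictly increasing positive sequences satisfying the gap and Müntz
conditions, `λ_n ≤ υ_n` for all `n`, and `sup_n (υ_n - λ_n) = δ < (8 ∑ 1/λ_n)⁻¹`, then
`M_{Λ,p}([0,1])` and `M_{Υ,p}([0,1])` are linearly topologically isomorphic, `1 ≤ p < ∞`. -/
theorem muntzSpace_isomorphic_of_sup_diff_small
    (Λ Υ : ℕ → ℝ) (hΛpos : ∀ n, 0 < Λ n) (hΥpos : ∀ n, 0 < Υ n)
    (hΛmono : StrictMono Λ) (hΥmono : StrictMono Υ)
    (hΛgap : ∃ c > 0, ∀ k, c ≤ Λ (k + 1) - Λ k)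
    (hΥgap : ∃ c > 0, ∀ k, c ≤ Υ (k + 1) - Υ k)
    (hΛMuntz : Summable fun n => 1 / Λ n) (hΥMuntz : Summable fun n => 1 / Υ n)
    (hle : ∀ n, Λ n ≤ Υ n) (δ : ℝ)
    (hδsup : IsLUB (Set.range fun n => Υ n - Λ n) δ)
    (hδ : δ < (8 * ∑' n, 1 / Λ n)⁻¹)
    (p : ℝ≥0∞) [Fact (1 ≤ p)] (hp' : p ≠ ∞) :
    Nonempty (↥(muntzSpace (Set.range Λ) p 0 1) ≃L[ℝ] ↥(muntzSpace (Set.range Υ) p 0 1)) := by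
  have hdiff n : |Υ n - Λ n| ≤ δ :=
    (abs_of_nonneg (sub_nonneg.2 (hle n))).trans_le (hδsup.1 ⟨n, rfl⟩)
  exact muntzSpace_isomorphic_of_sup_diff_small_general Λ Υ hΛpos hΥpos hΛmono.injective
    hΥmono.injective (summable_abs_sub_div_of_abs_sub_le hΛpos hdiff hΛMuntz) p
end

section
/- Let Λ = (λ_k)_{k∈ℕ} be a strictly increasing sequence of positive real numbers satisfying the gap condition and the Müntz condition, let 1 < α < ∞, 1 < p < ∞, and let 0 < δ < 1 with δ > α^{1/(1−α)}. Let T : L_p(δ^α,1) → L_p(δ^α,1) be the operator T f = f − E(Q_α f), where (Q_α f)(t) = f(t^α) for t ∈ (δ,1) and E denotes the extension by zero from (δ,1) to (δ^α,1). Then T restricted to M_{Λ,p}([δ^α,1]) is a linear topological isomorphism onto its image Z_{Λ,p,α,δ} := (I − Q_α)[M_{Λ,p}([δ^α,1])]; in particular Z_{Λ,p,α,δ} is isomorphic to M_{Λ,p}([δ^α,1]). -/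
open MeasureTheory Filter
open scoped ENNReal NNReal Topology

/-!
The substitution `t = s ^ α` has Jacobian at least `α * δ ^ (α - 1)` on `(δ, 1)`, so `E ∘ Q_α` has
norm at most `(α * δ ^ (α - 1)) ^ (-1 / p)`. The condition `α ^ (1 / (1 - α)) < δ` says precisely
that `1 < α * δ ^ (α - 1)`. Hence `T = 1 - E ∘ Q_α` is invertible on all of `L_p` by the Neumann
series, and an invertible operator maps every subspace isomorphically onto its image.
-/

section CompositionOperator

variable {X Y E : Type*} [MeasurableSpace X] [MeasurableSpace Y] [NormedAddCommGroup E]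
  {μ : Measure X} {ν : Measure Y} {p c : ℝ≥0∞} {s : Set X}

theorem eLpNorm_indicator_comp_le {φ : X → Y} (hs : MeasurableSet s)
    (hφ : AEMeasurable φ (μ.restrict s)) (hmap : (μ.restrict s).map φ ≤ c • ν)
    {f : Y → E} (hf : AEStronglyMeasurable f ν) :
    eLpNorm (s.indicator fun x ↦ f (φ x)) p μ ≤ c ^ (1 / p).toReal * eLpNorm f p ν := by
  have hf_map : AEStronglyMeasurable f ((μ.restrict s).map φ) :=
    hf.mono_ac (Measure.absolutelyContinuous_of_le_smul hmap)
  calc eLpNorm (s.indicator fun x ↦ f (φ x)) p μ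
      = eLpNorm (f ∘ φ) p (μ.restrict s) := eLpNorm_indicator_eq_eLpNorm_restrict hs
    _ = eLpNorm f p ((μ.restrict s).map φ) := (eLpNorm_map_measure hf_map hφ).symm
    _ ≤ c ^ (1 / p).toReal * eLpNorm f p ν := eLpNorm_le_of_measure_le_smul hmap

variable {𝕜 : Type*} [NontriviallyNormedField 𝕜] [NormedSpace 𝕜 E] [Fact (1 ≤ p)]

theorem norm_lt_one_of_ae_eq_indicator_comp (hp : p ≠ ∞) {φ : X → X} (hs : MeasurableSet s)
    (hφ : AEMeasurable φ (μ.restrict s)) (hmap : (μ.restrict s).map φ ≤ c • μ) (hc : c < 1)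
    (S : Lp E p μ →L[𝕜] Lp E p μ) (hS : ∀ f, S f =ᵐ[μ] s.indicator fun x ↦ f (φ x)) :
    ‖S‖ < 1 := by
  have hp0 : p ≠ 0 := (zero_lt_one.trans_le Fact.out).ne'
  have hexp : 0 < (1 / p).toReal := ENNReal.toReal_pos (by simpa using hp) (by simpa using hp0)
  have hK : c ^ (1 / p).toReal < 1 := ENNReal.rpow_lt_one hc hexp
  have hbound (f : Lp E p μ) : ‖S f‖ ≤ (c ^ (1 / p).toReal).toReal * ‖f‖ := by
    rw [Lp.norm_def, Lp.norm_def, eLpNorm_congr_ae (hS f), ← ENNReal.toReal_mul]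
    exact ENNReal.toReal_mono (ENNReal.mul_ne_top hK.ne_top (Lp.eLpNorm_ne_top f))
      (eLpNorm_indicator_comp_le hs hφ hmap (Lp.aestronglyMeasurable f))
  calc ‖S‖ ≤ (c ^ (1 / p).toReal).toReal := S.opNorm_le_bound ENNReal.toReal_nonneg hbound
    _ < 1 := by simpa using (ENNReal.toReal_lt_toReal hK.ne_top ENNReal.one_ne_top).2 hK

end CompositionOperator

theorem isInvertible_of_norm_one_sub_lt_one {𝕜 F : Type*} [NontriviallyNormedField 𝕜]
    [NormedAddCommGroup F] [NormedSpace 𝕜 F] [CompleteSpace F] {T : F →L[𝕜] F}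
    (hT : ‖1 - T‖ < 1) : T.IsInvertible := by
  obtain ⟨u, hu⟩ : IsUnit T := by simpa using isUnit_one_sub_of_norm_lt_one hT
  exact ⟨ContinuousLinearEquiv.ofUnit u, hu⟩

theorem map_restrict_le_smul_restrict_image {F : Type*} [NormedAddCommGroup F] [NormedSpace ℝ F]
    [FiniteDimensional ℝ F] [MeasurableSpace F] [BorelSpace F] (μ : Measure F)
    [μ.IsAddHaarMeasure] {s : Set F} {φ : F → F} {φ' : F → F →L[ℝ] F} (hs : MeasurableSet s)
    (hφ' : ∀ x ∈ s, HasFDerivWithinAt φ (φ' x) s x) (hinj : Set.InjOn φ s)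
    {c : ℝ≥0∞} (hc : c ≠ ∞) (hdet : ∀ x ∈ s, 1 ≤ c * ENNReal.ofReal |(φ' x).det|) :
    (μ.restrict s).map φ ≤ c • μ.restrict (φ '' s) := by
  have hφ : AEMeasurable φ (μ.restrict s) :=
    ContinuousOn.aemeasurable (fun x hx ↦ (hφ' x hx).continuousWithinAt) hs
  let J : F → ℝ≥0∞ := fun x ↦ ENNReal.ofReal |(φ' x).det|
  have hle : μ.restrict s ≤ c • (μ.restrict s).withDensity J := by
    rw [← withDensity_smul' c J hc]
    nth_rw 1 [← withDensity_one (μ := μ.restrict s)]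
    exact withDensity_mono (ae_restrict_of_forall_mem hs hdet)
  have hφJ : AEMeasurable φ (c • (μ.restrict s).withDensity J) :=
    (hφ.mono_ac (withDensity_absolutelyContinuous _ _)).smul_measure c
  calc (μ.restrict s).map φ
      ≤ (c • (μ.restrict s).withDensity J).map φ := Measure.map_mono_of_aemeasurable hle hφJ
    _ = c • μ.restrict (φ '' s) := by
      rw [Measure.map_smul,
        map_withDensity_abs_det_fderiv_eq_addHaar μ hs.nullMeasurableSet hφ' hinj]

theorem map_rpow_restrict_le_smul_restrict_image {α δ : ℝ} (hα : 1 ≤ α) (hδ : 0 < δ) {s : Set ℝ}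
    (hs : MeasurableSet s) (hsδ : s ⊆ Set.Ici δ) :
    (volume.restrict s).map (fun x : ℝ ↦ x ^ α) ≤
      ENNReal.ofReal (α * δ ^ (α - 1))⁻¹ • volume.restrict ((fun x : ℝ ↦ x ^ α) '' s) := by
  have hs_pos {x : ℝ} (hx : x ∈ s) : 0 < x := hδ.trans_le (hsδ hx)
  refine map_restrict_le_smul_restrict_image volume hs
    (fun x hx ↦ (Real.hasDerivAt_rpow_const (.inl (hs_pos hx).ne')).hasFDerivAt.hasFDerivWithinAt)
    (fun x hx y hy ↦ (Real.rpow_left_inj (hs_pos hx).le (hs_pos hy).le (by positivity)).1)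
    ENNReal.ofReal_ne_top fun x hx ↦ ?_
  have hderiv : α * δ ^ (α - 1) ≤ α * x ^ (α - 1) := by
    gcongr
    exact hsδ hx
  rw [ContinuousLinearMap.det_toSpanSingleton, ← ENNReal.ofReal_mul (by positivity),
    ENNReal.one_le_ofReal, inv_mul_eq_div, one_le_div (by positivity)]
  exact hderiv.trans (le_abs_self _)

theorem image_rpow_Ioo_subset_Icc {α a b : ℝ} (hα : 0 ≤ α) (ha : 0 ≤ a) :
    (fun x : ℝ ↦ x ^ α) '' Set.Ioo a b ⊆ Set.Icc (a ^ α) (b ^ α) := by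
  rintro _ ⟨x, hx, rfl⟩
  exact ⟨Real.rpow_le_rpow ha hx.1.le hα, Real.rpow_le_rpow (ha.trans hx.1.le) hx.2.le hα⟩

theorem map_rpow_restrict_Ioo_le_smul_restrict_Icc {α δ : ℝ} (b : ℝ) (hα : 1 ≤ α) (hδ : 0 < δ) :
    (volume.restrict (Set.Ioo δ b)).map (fun x : ℝ ↦ x ^ α) ≤
      ENNReal.ofReal (α * δ ^ (α - 1))⁻¹ • volume.restrict (Set.Icc (δ ^ α) (b ^ α)) := by
  grw [map_rpow_restrict_le_smul_restrict_image hα hδ measurableSet_Ioo fun _ hx ↦ hx.1.le,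
    image_rpow_Ioo_subset_Icc (zero_le_one.trans hα) hδ.le]

theorem one_lt_mul_rpow_sub_one {α δ : ℝ} (hα : 1 < α) (hδ : α ^ (1 / (1 - α)) < δ) :
    1 < α * δ ^ (α - 1) := by
  have hα0 : 0 < α := zero_lt_one.trans hα
  have hexp : 1 / (1 - α) * (α - 1) = -1 := by
    rw [one_div_mul_eq_div, div_eq_iff (by linarith)]
    ring
  calc 1 = α * (α ^ (1 / (1 - α))) ^ (α - 1) := by
        rw [← Real.rpow_mul hα0.le, hexp, Real.rpow_neg_one, mul_inv_cancel₀ hα0.ne']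
    _ < α * δ ^ (α - 1) := by gcongr

theorem muntzSpace_isomorphic_sub_substitution_general {𝕜 E : Type*} [NontriviallyNormedField 𝕜]
    [NormedAddCommGroup E] [NormedSpace 𝕜 E] [CompleteSpace E]
    {p : ℝ≥0∞} [Fact (1 ≤ p)] (hp : p ≠ ∞)
    {α δ : ℝ} (hα : 1 < α) (hδ : α ^ (1 / (1 - α)) < δ)
    (T : Lp E p (volume.restrict (Set.Icc (δ ^ α) 1)) →L[𝕜]
        Lp E p (volume.restrict (Set.Icc (δ ^ α) 1)))
    (hT : ∀ f, T f =ᵐ[volume.restrict (Set.Icc (δ ^ α) 1)]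
        fun t ↦ f t - (Set.Ioo δ 1).indicator (fun s ↦ f (s ^ α)) t) :
    T.IsInvertible := by
  have hδ0 : 0 < δ := (Real.rpow_pos_of_pos (by linarith) _).trans hδ
  have hmeas : Measurable fun x : ℝ ↦ x ^ α := by fun_prop
  have hmap : ((volume.restrict (Set.Icc (δ ^ α) 1)).restrict (Set.Ioo δ 1)).map
      (fun x : ℝ ↦ x ^ α) ≤
        ENNReal.ofReal (α * δ ^ (α - 1))⁻¹ • volume.restrict (Set.Icc (δ ^ α) 1) :=
    calc ((volume.restrict (Set.Icc (δ ^ α) 1)).restrict (Set.Ioo δ 1)).map (fun x : ℝ ↦ x ^ α)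
        ≤ (volume.restrict (Set.Ioo δ 1)).map (fun x : ℝ ↦ x ^ α) :=
          Measure.map_mono (Measure.restrict_mono le_rfl Measure.restrict_le_self) hmeas
      _ ≤ ENNReal.ofReal (α * δ ^ (α - 1))⁻¹ • volume.restrict (Set.Icc (δ ^ α) 1) := by
          simpa using map_rpow_restrict_Ioo_le_smul_restrict_Icc 1 hα.le hδ0
  have hratio : ENNReal.ofReal (α * δ ^ (α - 1))⁻¹ < 1 :=
    ENNReal.ofReal_lt_one.2 (inv_lt_one_of_one_lt₀ (one_lt_mul_rpow_sub_one hα hδ))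
  refine isInvertible_of_norm_one_sub_lt_one <|
    norm_lt_one_of_ae_eq_indicator_comp hp measurableSet_Ioo hmeas.aemeasurable hmap hratio _
      fun f ↦ ?_
  filter_upwards [Lp.coeFn_sub f (T f), hT f] with t hsub hTt
  rw [sub_apply, one_apply_eq_self, hsub, Pi.sub_apply, hTt, sub_sub_cancel]

/-- Let `Λ` be strictly increasing positive with gap and Müntz conditions, `1 < α`,
`1 < p < ∞`, `α^{1/(1-α)} < δ < 1`. If `T : L_p(δ^α,1) → L_p(δ^α,1)` is the operator
`T f = f - E(Q_α f)` (where `(Q_α f)(t) = f(t^α)` on `(δ,1)` and `E` extends by zero),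
then `T` restricted to `M_{Λ,p}([δ^α,1])` is a linear topological isomorphism onto its
image `Z_{Λ,p,α,δ} = (I - Q_α)[M_{Λ,p}([δ^α,1])]`. -/
theorem muntzSpace_isomorphic_sub_substitution
    (Λ : ℕ → ℝ) (hpos : ∀ k, 0 < Λ k) (hmono : StrictMono Λ)
    (hgap : ∃ c > 0, ∀ k, c ≤ Λ (k + 1) - Λ k)
    (hMuntz : Summable fun k => 1 / Λ k)
    (p : ℝ≥0∞) [Fact (1 ≤ p)] (hp : 1 < p) (hp' : p ≠ ∞)
    (α : ℝ) (hα : 1 < α)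
    (δ : ℝ) (hδ : α ^ (1 / (1 - α)) < δ) (hδ1 : δ < 1)
    (T : Lp ℝ p (volume.restrict (Set.Icc (δ ^ α) 1)) →L[ℝ]
        Lp ℝ p (volume.restrict (Set.Icc (δ ^ α) 1)))
    (hT : ∀ f : Lp ℝ p (volume.restrict (Set.Icc (δ ^ α) 1)),
      (T f : ℝ → ℝ) =ᵐ[volume.restrict (Set.Icc (δ ^ α) 1)]
        fun t => f t - Set.indicator (Set.Ioo δ 1) (fun s => f (s ^ α)) t) :
    ∃ e : ↥(muntzSpace (Set.range Λ) p (δ ^ α) 1) ≃L[ℝ]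
        ↥(Submodule.map (T : Lp ℝ p (volume.restrict (Set.Icc (δ ^ α) 1)) →ₗ[ℝ]
            Lp ℝ p (volume.restrict (Set.Icc (δ ^ α) 1)))
          (muntzSpace (Set.range Λ) p (δ ^ α) 1)),
      ∀ x : ↥(muntzSpace (Set.range Λ) p (δ ^ α) 1),
        (e x : Lp ℝ p (volume.restrict (Set.Icc (δ ^ α) 1))) = T x := by
  obtain ⟨e, rfl⟩ := muntzSpace_isomorphic_sub_substitution_general hp' hα hδ T hT
  exact ⟨e.submoduleMap _, fun _ ↦ rfl⟩
end
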